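/- With the fusion weight λ_1 = ε, so that p_1^s = ε·p_o + (1−ε)·p_1 = (2ε(1−ε), ε² + (1−ε)²), the symmetric cross-entropy dissimilarity between the sponsored answer of advertiser 1 and the organic answer satisfies lim_{ε→0⁺} [CE(p_1^s‖p_o) + CE(p_o‖p_1^s) + 2·log ε + log 2] = 0 (equivalently, the user utility S(p_1^s, p_o) equals 2A + 2·log ε + log 2 up to a term vanishing as ε → 0⁺). -/

import Mathlib

/-- Cross entropy between two distributions over a two-token vocabulary. -/
noncomputable def CE (p q : ℝ × ℝ) : ℝ := -(p.1 * Real.log q.1 + p.2 * Real.log q.2)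

/-- Similarity based on symmetric cross entropy, with constant `A`. -/
noncomputable def Sim (A : ℝ) (p q : ℝ × ℝ) : ℝ := 2 * A - CE p q - CE q p

/-- Linear fusion of two unigram language models with weight `l`. -/
noncomputable def mix (l : ℝ) (p q : ℝ × ℝ) : ℝ × ℝ :=
  (l * p.1 + (1 - l) * q.1, l * p.2 + (1 - l) * q.2)

/-!
The two distributions concentrate on opposite tokens: the organic answer gives token `b` the mass
`ε`, and the sponsored answer gives token `a` the mass `2 ε (1 - ε)`. When `p` concentrates on a
token, `CE p q` is `-log` of the mass that `q` gives to that token, up to `o(1)`. Hence the two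
cross entropies are `-log ε` and `-log (2 ε (1 - ε))`, and the ratio of these two small masses
tends to `2`.
-/

open Filter Topology

lemma CE_swap (p q : ℝ × ℝ) : CE p.swap q.swap = CE p q := by
  simp only [CE, Prod.fst_swap, Prod.snd_swap, add_comm]

lemma CE_add_log_snd {p : ℝ × ℝ} (hp : p.1 + p.2 = 1) (q : ℝ × ℝ) :
    CE p q + Real.log q.2 = p.1 * Real.log q.2 - p.1 * Real.log q.1 := by
  rw [CE]
  linear_combination -Real.log q.2 * hp

lemma mix_fst_add_snd (l : ℝ) {p q : ℝ × ℝ} (hp : p.1 + p.2 = 1) (hq : q.1 + q.2 = 1) :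
    (mix l p q).1 + (mix l p q).2 = 1 := by
  rw [mix]
  linear_combination l * hp + (1 - l) * hq

section Limits

variable {α : Type*} {F : Filter α} {p q : α → ℝ × ℝ} {c : ℝ}

lemma tendsto_CE_add_log_snd (hp : ∀ᶠ x in F, (p x).1 + (p x).2 = 1)
    (hp₁ : Tendsto (fun x => (p x).1) F (𝓝 0))
    (hq₁ : Tendsto (fun x => (q x).1) F (𝓝 c)) (hc : c ≠ 0)
    (hpq : Tendsto (fun x => (p x).1 * Real.log (q x).2) F (𝓝 0)) :
    Tendsto (fun x => CE (p x) (q x) + Real.log (q x).2) F (𝓝 0) := by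
  have hlim : Tendsto (fun x => (p x).1 * Real.log (q x).2 - (p x).1 * Real.log (q x).1) F
      (𝓝 0) := by
    simpa only [zero_mul, sub_zero] using hpq.sub (hp₁.mul (hq₁.log hc))
  refine hlim.congr' ?_
  filter_upwards [hp] with x hx
  exact (CE_add_log_snd hx (q x)).symm

lemma tendsto_CE_add_log_fst (hp : ∀ᶠ x in F, (p x).1 + (p x).2 = 1)
    (hp₂ : Tendsto (fun x => (p x).2) F (𝓝 0))
    (hq₂ : Tendsto (fun x => (q x).2) F (𝓝 c)) (hc : c ≠ 0)
    (hpq : Tendsto (fun x => (p x).2 * Real.log (q x).1) F (𝓝 0)) :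
    Tendsto (fun x => CE (p x) (q x) + Real.log (q x).1) F (𝓝 0) := by
  have hp_swap : ∀ᶠ x in F, (p x).swap.1 + (p x).swap.2 = 1 :=
    hp.mono fun x hx => (add_comm _ _).trans hx
  simpa only [CE_swap, Prod.snd_swap] using
    tendsto_CE_add_log_snd (q := fun x => (q x).swap) hp_swap hp₂ hq₂ hc hpq

lemma tendsto_mul_log_of_tendsto_div {f g : α → ℝ} (hf₀ : ∀ᶠ x in F, f x ≠ 0)
    (hf : Tendsto f F (𝓝 0)) (hgf : Tendsto (fun x => g x / f x) F (𝓝 c)) :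
    Tendsto (fun x => g x * Real.log (f x)) F (𝓝 0) := by
  have hf_log : Tendsto (fun x => f x * Real.log (f x)) F (𝓝 0) := by
    simpa only [Function.comp_def, zero_mul] using (Real.continuous_mul_log.tendsto 0).comp hf
  have hlim : Tendsto (fun x => g x / f x * (f x * Real.log (f x))) F (𝓝 0) := by
    simpa only [mul_zero] using hgf.mul hf_log
  refine hlim.congr' ?_
  filter_upwards [hf₀] with x hx
  rw [← mul_assoc, div_mul_cancel₀ _ hx]

theorem tendsto_CE_add_CE_add_two_mul_log
    (hp : ∀ᶠ x in F, (p x).1 + (p x).2 = 1) (hq : ∀ᶠ x in F, (q x).1 + (q x).2 = 1)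
    (hp₂ : Tendsto (fun x => (p x).2) F (𝓝 0))
    (hqp : Tendsto (fun x => (q x).1 / (p x).2) F (𝓝 c)) (hc : c ≠ 0) :
    Tendsto (fun x => CE (q x) (p x) + CE (p x) (q x) + 2 * Real.log (p x).2) F
      (𝓝 (-Real.log c)) := by
  -- As `y / 0 = 0`, a nonzero limit of the ratio also keeps its denominator away from zero.
  have hne : ∀ᶠ x in F, (q x).1 ≠ 0 ∧ (p x).2 ≠ 0 :=
    (hqp.eventually_ne hc).mono fun _ => div_ne_zero_iff.mp
  have hq₁ : Tendsto (fun x => (q x).1) F (𝓝 0) := by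
    refine Tendsto.congr' ?_ (by simpa only [mul_zero] using hqp.mul hp₂)
    filter_upwards [hne] with x hx using div_mul_cancel₀ _ hx.2
  have hp₁ : Tendsto (fun x => (p x).1) F (𝓝 1) := by
    refine Tendsto.congr' ?_ (by simpa only [sub_zero] using hp₂.const_sub 1)
    filter_upwards [hp] with x hx using (eq_sub_of_add_eq hx).symm
  have hq₂ : Tendsto (fun x => (q x).2) F (𝓝 1) := by
    refine Tendsto.congr' ?_ (by simpa only [sub_zero] using hq₁.const_sub 1)
    filter_upwards [hq] with x hx using (eq_sub_of_add_eq' hx).symm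
  have hpq : Tendsto (fun x => (p x).2 / (q x).1) F (𝓝 c⁻¹) := by
    simpa only [inv_div] using hqp.inv₀ hc
  have hCE_qp := tendsto_CE_add_log_snd hq hq₁ hp₁ one_ne_zero
    (tendsto_mul_log_of_tendsto_div (hne.mono fun _ h => h.2) hp₂ hqp)
  have hCE_pq := tendsto_CE_add_log_fst hp hp₂ hq₂ one_ne_zero
    (tendsto_mul_log_of_tendsto_div (hne.mono fun _ h => h.1) hq₁ hpq)
  have hlim := (hCE_qp.add hCE_pq).sub (hqp.log hc)
  rw [add_zero, zero_sub] at hlim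
  refine hlim.congr' ?_
  filter_upwards [hne] with x ⟨hq_ne, hp_ne⟩
  rw [Real.log_div hq_ne hp_ne]
  ring

end Limits

lemma mix_swap_fst (ε : ℝ) : (mix ε (1 - ε, ε) (ε, 1 - ε)).1 = ε * (2 * (1 - ε)) := by
  rw [mix]
  ring

lemma tendsto_mix_swap_fst_div :
    Tendsto (fun ε : ℝ => (mix ε (1 - ε, ε) (ε, 1 - ε)).1 / ε) (𝓝[>] 0) (𝓝 2) := by
  have hlim : Tendsto (fun ε : ℝ => 2 * (1 - ε)) (𝓝[>] 0) (𝓝 2) :=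
    (Continuous.tendsto' (by fun_prop) 0 2 (by norm_num)).mono_left nhdsWithin_le_nhds
  refine hlim.congr' ?_
  filter_upwards [self_mem_nhdsWithin] with ε (hε : 0 < ε)
  rw [mix_swap_fst, mul_div_cancel_left₀ _ hε.ne']

/-- With λ₁ = ε, the symmetric cross-entropy dissimilarity between advertiser 1's
sponsored answer and the organic answer satisfies
CE(p₁ˢ‖p_o) + CE(p_o‖p₁ˢ) + 2·log ε + log 2 → 0 as ε → 0⁺. -/
theorem ad1_user_utility_asymptotics :
    Filter.Tendsto
      (fun ε : ℝ =>
        CE (mix ε (1 - ε, ε) (ε, 1 - ε)) (1 - ε, ε) +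
          CE (1 - ε, ε) (mix ε (1 - ε, ε) (ε, 1 - ε)) +
          2 * Real.log ε + Real.log 2)
      (nhdsWithin 0 (Set.Ioi 0)) (nhds 0) := by
  have hp (ε : ℝ) : (1 - ε) + ε = 1 := sub_add_cancel 1 ε
  have hq (ε : ℝ) : (mix ε (1 - ε, ε) (ε, 1 - ε)).1 + (mix ε (1 - ε, ε) (ε, 1 - ε)).2 = 1 :=
    mix_fst_add_snd ε (hp ε) (add_sub_cancel ε 1)
  have hε : Tendsto (fun ε : ℝ => ε) (𝓝[>] 0) (𝓝 0) := nhdsWithin_le_nhds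
  have hlim := tendsto_CE_add_CE_add_two_mul_log (p := fun ε => (1 - ε, ε))
    (.of_forall hp) (.of_forall hq) hε tendsto_mix_swap_fst_div two_ne_zero
  simpa only [neg_add_cancel] using hlim.add_const (Real.log 2)
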